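/- arXiv:0804.3411 — 5 statements merged into one kernel-verified Lean document; each statement's English description precedes it below -/
import Mathlib

section
/- Let A be a real M×N matrix of rank m < N, let Q be an m×N matrix with orthonormal rows and L an M×m matrix of rank m such that A = LQ, and let U be an N×(N−m) matrix with orthonormal columns whose columns span the null space of A. For any subset J ⊆ {1,…,N} with complement J^c, the submatrix A(:,J) consisting of the columns of A indexed by J has a non-trivial null vector if and only if the submatrix U(J^c,:) consisting of the rows of U indexed by J^c has a non-trivial null vector. -/
open Matrix

theorem submatrix_mulVec_of_zero_off {M N : ℕ} (A : Matrix (Fin M) (Fin N) ℝ)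
    (J : Finset (Fin N)) (y : Fin N → ℝ) (hy : ∀ i, i ∉ J → y i = 0) :
    (A.submatrix id (fun j : J => (j : Fin N))).mulVec (fun j : J => y j) = A.mulVec y := by
  funext i
  simp only [Matrix.mulVec, dotProduct, Matrix.submatrix_apply, id]
  rw [Finset.sum_coe_sort J (fun j => A i j * y j)]
  apply Finset.sum_subset (Finset.subset_univ J)
  intro j _ hj
  rw [hy j hj, mul_zero]

/-- With `A = L * Q` (`Q` with orthonormal rows, `L` of full rank `m`) and `U` an
`N × (N-m)` matrix with orthonormal columns whose columns span the null space of `A`, for any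
set `J` of column indices, the column submatrix `A(:,J)` has a non-trivial null vector iff the
row submatrix `U(Jᶜ,:)` has a non-trivial null vector. -/
theorem column_submatrix_null_iff_row_submatrix_null
    (M N m : ℕ) (hm : m < N)
    (A : Matrix (Fin M) (Fin N) ℝ) (hrank : A.rank = m)
    (L : Matrix (Fin M) (Fin m) ℝ) (hL : L.rank = m)
    (Q : Matrix (Fin m) (Fin N) ℝ) (hQ : Q * Qᵀ = 1)
    (hA : A = L * Q)
    (U : Matrix (Fin N) (Fin (N - m)) ℝ) (hU : Uᵀ * U = 1)
    (hUspan : LinearMap.range U.mulVecLin = LinearMap.ker A.mulVecLin)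
    (J : Finset (Fin N)) :
    (∃ x : {j // j ∈ J} → ℝ, x ≠ 0 ∧
        (A.submatrix id (fun j : J => (j : Fin N))).mulVec x = 0) ↔
      (∃ d : Fin (N - m) → ℝ, d ≠ 0 ∧
        (U.submatrix (fun i : (Jᶜ : Finset (Fin N)) => (i : Fin N)) id).mulVec d = 0) := by
  constructor
  · rintro ⟨x, hx, hAx⟩
    set y : Fin N → ℝ := fun i => if h : i ∈ J then x ⟨i, h⟩ else 0 with hy
    have hyJ : (fun j : J => y j) = x := by
      funext j
      simp [hy]
    have hy0 : ∀ i, i ∉ J → y i = 0 := fun i hi => by simp [hy, hi]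
    have hAy : A.mulVec y = 0 := by
      rw [← submatrix_mulVec_of_zero_off A J y hy0, hyJ, hAx]
    have hmem : y ∈ LinearMap.range U.mulVecLin := by
      rw [hUspan, LinearMap.mem_ker]
      exact hAy
    obtain ⟨d, hd⟩ := hmem
    have hd' : U.mulVec d = y := hd
    refine ⟨d, ?_, ?_⟩
    · rintro rfl
      apply hx
      rw [← hyJ, ← hd', Matrix.mulVec_zero]
      rfl
    · funext i
      have h1 : U.mulVec d i = 0 := by
        rw [hd']
        exact hy0 i (Finset.mem_compl.mp i.2)
      exact h1
  · rintro ⟨d, hd, hUd⟩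
    have hy0 : ∀ i, i ∉ J → U.mulVec d i = 0 := fun i hi =>
      congrFun hUd ⟨i, Finset.mem_compl.mpr hi⟩
    refine ⟨fun j => U.mulVec d j, ?_, ?_⟩
    · intro h
      apply hd
      have hz : U.mulVec d = 0 := by
        funext i
        by_cases hi : i ∈ J
        · exact congrFun h ⟨i, hi⟩
        · exact hy0 i hi
      rw [← Matrix.one_mulVec d, ← hU, ← Matrix.mulVec_mulVec, hz, Matrix.mulVec_zero]
    · rw [submatrix_mulVec_of_zero_off A J (U.mulVec d) hy0]
      have hmem : U.mulVec d ∈ LinearMap.ker A.mulVecLin := by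
        rw [← hUspan]
        exact ⟨d, rfl⟩
      exact hmem
end

section
/- Let A be a real M×N matrix of rank m < N and let U be an N×(N−m) matrix with orthonormal columns whose columns span the null space of A. A subset J ⊆ {1,…,N} is a circuit of A if and only if U(J^c,:) has a non-zero null vector and, for every k ∈ J, the matrix U(K,:) with K = J^c ∪ {k} has full rank. -/
open Matrix

/-- A set `J` of column indices of `A` is a circuit if the columns indexed by `J` are linearly
dependent but the columns indexed by any proper subset of `J` are linearly independent. -/
def IsCircuit {M N : Type*} (A : Matrix M N ℝ) (J : Finset N) : Prop :=
  (¬ LinearIndependent ℝ fun j : J => fun i => A i j) ∧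
    ∀ J' : Finset N, J' ⊂ J → LinearIndependent ℝ fun j : J' => fun i => A i j

lemma colIndep_iff {M N : ℕ} (A : Matrix (Fin M) (Fin N) ℝ) (S : Finset (Fin N)) :
    (LinearIndependent ℝ fun j : S => fun i => A i j) ↔
      ∀ x : Fin N → ℝ, A *ᵥ x = 0 → (∀ i, i ∉ S → x i = 0) → x = 0 := by
  have key : ∀ x : Fin N → ℝ, (∀ i, i ∉ S → x i = 0) →
      ∑ j : S, x j • (fun i => A i j) = A *ᵥ x := by
    intro x hx
    ext r
    rw [Finset.sum_apply, Finset.sum_coe_sort S (fun j => (x j • (fun i => A i j)) r)]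
    simp only [Matrix.mulVec, dotProduct, Pi.smul_apply, smul_eq_mul]
    rw [Finset.sum_subset (Finset.subset_univ S)]
    · exact Finset.sum_congr rfl fun i _ => mul_comm _ _
    · intro i _ hi
      simp [hx i hi]
  rw [Fintype.linearIndependent_iff]
  constructor
  · intro h x hA hx
    have h2 := h (fun j => x j) (by rw [key x hx, hA])
    ext i
    by_cases hi : i ∈ S
    · exact h2 ⟨i, hi⟩
    · exact hx i hi
  · intro h g hg j
    set x : Fin N → ℝ := fun i => if hi : i ∈ S then g ⟨i, hi⟩ else 0 with hxdef
    have hx : ∀ i, i ∉ S → x i = 0 := fun i hi => by simp [hxdef, hi]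
    have hxg : ∀ j : S, x j = g j := fun j => by simp [hxdef]
    have h3 := h x (by rw [← key x hx]; simpa only [hxg] using hg) hx
    rw [← hxg, h3]; rfl

lemma colIndep_iff_null {M N p : ℕ} (A : Matrix (Fin M) (Fin N) ℝ)
    (U : Matrix (Fin N) (Fin p) ℝ) (hU : Uᵀ * U = 1)
    (hUspan : LinearMap.range U.mulVecLin = LinearMap.ker A.mulVecLin)
    (S T : Finset (Fin N)) (hT : ∀ i, i ∈ T ↔ i ∉ S) :
    (LinearIndependent ℝ fun j : S => fun i => A i j) ↔
      ∀ d : Fin p → ℝ,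
        (U.submatrix (fun i : T => (i : Fin N)) id).mulVec d = 0 → d = 0 := by
  have hsub : ∀ d : Fin p → ℝ, (U.submatrix (fun i : T => (i : Fin N)) id).mulVec d = 0 ↔
      ∀ i, i ∉ S → (U *ᵥ d) i = 0 := by
    intro d
    constructor
    · intro h i hi
      exact congrFun h ⟨i, (hT i).2 hi⟩
    · intro h
      ext i
      exact h i ((hT i).1 i.2)
  rw [colIndep_iff]
  constructor
  · intro h d hd
    have hk : U.mulVecLin d ∈ LinearMap.ker A.mulVecLin := hUspan ▸ ⟨d, rfl⟩
    have h0 : U *ᵥ d = 0 := h _ (by simpa using hk) ((hsub d).1 hd)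
    have : (Uᵀ * U) *ᵥ d = 0 := by rw [← Matrix.mulVec_mulVec, h0, Matrix.mulVec_zero]
    simpa [hU] using this
  · intro h x hA hx
    have hk : x ∈ LinearMap.range U.mulVecLin := by
      rw [hUspan]; simpa using hA
    obtain ⟨d, rfl⟩ := hk
    rw [h d ((hsub d).2 hx), map_zero]

lemma rank_full_iff {T : Type*} [Fintype T] {p : ℕ} (B : Matrix T (Fin p) ℝ) :
    B.rank = p ↔ ∀ d : Fin p → ℝ, B.mulVec d = 0 → d = 0 := by
  have h1 := LinearMap.finrank_range_add_finrank_ker B.mulVecLin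
  rw [Module.finrank_fin_fun] at h1
  have h2 : B.rank = p ↔ LinearMap.ker B.mulVecLin = ⊥ := by
    rw [← Submodule.finrank_eq_zero (R := ℝ)]
    unfold Matrix.rank
    omega
  rw [h2, LinearMap.ker_eq_bot']
  rfl

theorem isCircuit_iff_row_submatrices_of_null_basis
    (M N m : ℕ) (hm : m < N)
    (A : Matrix (Fin M) (Fin N) ℝ) (hrank : A.rank = m)
    (U : Matrix (Fin N) (Fin (N - m)) ℝ) (hU : Uᵀ * U = 1)
    (hUspan : LinearMap.range U.mulVecLin = LinearMap.ker A.mulVecLin)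
    (J : Finset (Fin N)) :
    IsCircuit A J ↔
      ((∃ d : Fin (N - m) → ℝ, d ≠ 0 ∧
          (U.submatrix (fun i : (Jᶜ : Finset (Fin N)) => (i : Fin N)) id).mulVec d = 0) ∧
        ∀ k ∈ J,
          (U.submatrix (fun i : (Jᶜ ∪ {k} : Finset (Fin N)) => (i : Fin N)) id).rank = N - m) := by
  unfold IsCircuit
  refine and_congr ?_ ?_
  · rw [colIndep_iff_null A U hU hUspan J Jᶜ (by simp)]
    push Not
    exact exists_congr fun d => and_comm
  · have hk : ∀ k ∈ J, ((LinearIndependent ℝ fun j : (J.erase k) => fun i => A i j) ↔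
        (U.submatrix (fun i : (Jᶜ ∪ {k} : Finset (Fin N)) => (i : Fin N)) id).rank = N - m) := by
      intro k _
      rw [rank_full_iff]
      refine colIndep_iff_null A U hU hUspan _ _ fun i => ?_
      simp only [Finset.mem_union, Finset.mem_compl, Finset.mem_singleton, Finset.mem_erase]
      tauto
    constructor
    · intro h k hkJ
      exact (hk k hkJ).1 (h _ (Finset.erase_ssubset hkJ))
    · intro h J' hJ'
      obtain ⟨k, hkJ, hkJ'⟩ := Finset.exists_of_ssubset hJ'
      have h1 := (colIndep_iff A _).1 ((hk k hkJ).2 (h k hkJ))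
      refine (colIndep_iff A J').2 fun x hA hx => h1 x hA fun i hi => hx i fun hiJ => hi ?_
      exact Finset.mem_erase.2 ⟨fun e => hkJ' (e ▸ hiJ), hJ'.1 hiJ⟩
end

section
/- Let A be a real M×N matrix of rank m < N and let U be an N×(N−m) matrix with orthonormal columns whose columns span the null space of A. A subset J ⊆ {1,…,N} is a circuit of A if and only if there exists a subset I ⊆ {1,…,N} with I ∩ J = ∅ such that the null space of U(I,:) is one-dimensional, generated by a vector d, and supp(Ud) = J. -/
open Matrix

theorem columns_linearIndependent_iff {M N : ℕ} (A : Matrix (Fin M) (Fin N) ℝ)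
    (J : Finset (Fin N)) :
    (LinearIndependent ℝ fun j : J => fun i => A i j) ↔
      ∀ x : Fin N → ℝ, A.mulVec x = 0 → (∀ i, i ∉ J → x i = 0) → x = 0 := by
  have key : ∀ x : Fin N → ℝ, (∀ i, i ∉ J → x i = 0) →
      ∑ j : J, x j • (fun i => A i j : Fin M → ℝ) = A.mulVec x := by
    intro x hx
    funext k
    rw [Finset.sum_apply]
    simp only [Pi.smul_apply, smul_eq_mul, Matrix.mulVec, dotProduct]
    rw [Finset.sum_coe_sort J (fun j => x j * A k j)]
    rw [← Finset.sum_subset (Finset.subset_univ J)]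
    · exact Finset.sum_congr rfl fun j _ => mul_comm _ _
    · intro i _ hi
      rw [hx i hi, mul_zero]
  rw [Fintype.linearIndependent_iff]
  constructor
  · intro h x hA hx
    have h1 := h (fun j => x j) (by rw [key x hx, hA])
    funext i
    by_cases hi : i ∈ J
    · exact h1 ⟨i, hi⟩
    · exact hx i hi
  · intro h g hg j
    let x : Fin N → ℝ := fun i => if hi : i ∈ J then g ⟨i, hi⟩ else 0
    have hx : ∀ i, i ∉ J → x i = 0 := fun i hi => by simp [x, hi]
    have hxg : ∀ j : J, x j = g j := fun j => by simp [x]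
    have h0 := h x (by rw [← key x hx, ← hg]; simp only [hxg]) hx
    rw [← hxg j, h0]
    rfl

/-- `J` is a circuit of `A` iff there is a set `I` of row indices of `U`, disjoint
from `J`, such that the null space of `U(I,:)` is one-dimensional, generated by a vector `d`,
and `supp (U d) = J`. -/
theorem isCircuit_iff_exists_disjoint_rows_one_dim_nullspace
    (M N m : ℕ) (hm : m < N)
    (A : Matrix (Fin M) (Fin N) ℝ) (hrank : A.rank = m)
    (U : Matrix (Fin N) (Fin (N - m)) ℝ) (hU : Uᵀ * U = 1)
    (hUspan : LinearMap.range U.mulVecLin = LinearMap.ker A.mulVecLin)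
    (J : Finset (Fin N)) :
    IsCircuit A J ↔
      ∃ I : Finset (Fin N), Disjoint I J ∧
        ∃ d : Fin (N - m) → ℝ, d ≠ 0 ∧
          LinearMap.ker (U.submatrix (fun i : I => (i : Fin N)) id).mulVecLin =
            Submodule.span ℝ {d} ∧
          Function.support (U.mulVec d) = (J : Set (Fin N)) := by
  have hinj : ∀ e, U.mulVec e = 0 → e = 0 := by
    intro e he
    have : (Uᵀ * U).mulVec e = 0 := by rw [← Matrix.mulVec_mulVec, he, Matrix.mulVec_zero]
    rwa [hU, Matrix.one_mulVec] at this
  have hAU : ∀ e, A.mulVec (U.mulVec e) = 0 := by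
    intro e
    have : U.mulVecLin e ∈ LinearMap.ker A.mulVecLin := hUspan ▸ LinearMap.mem_range_self _ e
    simpa using this
  have hex : ∀ x, A.mulVec x = 0 → ∃ e, U.mulVec e = x := by
    intro x hx
    have : x ∈ LinearMap.range U.mulVecLin := by
      rw [hUspan]; simpa using hx
    obtain ⟨e, he⟩ := this
    exact ⟨e, by simpa using he⟩
  have hker : ∀ (I : Finset (Fin N)) (e : Fin (N - m) → ℝ),
      e ∈ LinearMap.ker (U.submatrix (fun i : I => (i : Fin N)) id).mulVecLin ↔
        ∀ i ∈ I, U.mulVec e i = 0 := by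
    intro I e
    rw [LinearMap.mem_ker, Matrix.mulVecLin_apply]
    constructor
    · intro h i hi
      exact congrFun h ⟨i, hi⟩
    · intro h
      funext i
      exact h i i.2
  unfold IsCircuit
  simp only [columns_linearIndependent_iff]
  constructor
  · rintro ⟨h1, h2⟩
    push Not at h1
    obtain ⟨x, hA, hx, hx0⟩ := h1
    have hsupp : ∀ i, i ∈ J → x i ≠ 0 := by
      intro i hi hxi
      apply hx0
      refine h2 (J.erase i) (Finset.erase_ssubset hi) x hA fun k hk => ?_
      by_cases hki : k = i
      · rw [hki, hxi]
      · exact hx k fun hkJ => hk (Finset.mem_erase.2 ⟨hki, hkJ⟩)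
    obtain ⟨d, rfl⟩ := hex x hA
    refine ⟨Jᶜ, disjoint_compl_left, d, ?_, ?_, ?_⟩
    · rintro rfl
      exact hx0 (Matrix.mulVec_zero _)
    · ext e
      rw [hker, Submodule.mem_span_singleton]
      constructor
      · intro he
        obtain ⟨j, hj⟩ := Function.ne_iff.1 hx0
        have hj : U.mulVec d j ≠ 0 := hj
        have hjJ : j ∈ J := by
          by_contra hn
          exact hj (hx j hn)
        refine ⟨U.mulVec e j / U.mulVec d j, ?_⟩
        have := h2 (J.erase j) (Finset.erase_ssubset hjJ)
          (U.mulVec ((U.mulVec e j / U.mulVec d j) • d - e)) (hAU _) ?_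
        · exact sub_eq_zero.1 (hinj _ this)
        · intro k hk
          rw [Matrix.mulVec_sub, Matrix.mulVec_smul, Pi.sub_apply, Pi.smul_apply, smul_eq_mul]
          by_cases hkj : k = j
          · rw [hkj, div_mul_cancel₀ _ hj, sub_self]
          · have hkJ : k ∉ J := fun hkJ => hk (Finset.mem_erase.2 ⟨hkj, hkJ⟩)
            rw [hx k hkJ, he k (Finset.mem_compl.2 hkJ)]
            simp
      · rintro ⟨c, rfl⟩ i hi
        rw [Matrix.mulVec_smul, Pi.smul_apply, hx i (Finset.mem_compl.1 hi), smul_zero]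
    · ext i
      rw [Function.mem_support, Finset.mem_coe]
      exact ⟨fun h => by_contra fun hn => h (hx i hn), hsupp i⟩
  · rintro ⟨I, hIJ, d, hd, hk, hs⟩
    have hmem : ∀ i, U.mulVec d i ≠ 0 ↔ i ∈ J := fun i => by
      rw [← Function.mem_support, hs, Finset.mem_coe]
    constructor
    · intro h
      exact hd (hinj d (h _ (hAU d) fun i hi => by_contra fun hn => hi ((hmem i).1 hn)))
    · intro J' hJ' y hAy hy
      obtain ⟨e, rfl⟩ := hex y hAy
      have he := (hker I e).2 fun i hi =>
        hy i fun hi' => Finset.disjoint_left.1 hIJ hi (hJ'.1 hi')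
      rw [hk, Submodule.mem_span_singleton] at he
      obtain ⟨c, rfl⟩ := he
      obtain ⟨j, hjJ, hj'⟩ := Finset.exists_of_ssubset hJ'
      have h0 := hy j hj'
      rw [Matrix.mulVec_smul, Pi.smul_apply, smul_eq_mul] at h0
      have hc : c = 0 := (mul_eq_zero.1 h0).resolve_right ((hmem j).2 hjJ)
      rw [hc, zero_smul, Matrix.mulVec_zero]
end

section
/- Let β, γ be nonzero reals with |γ|/|β| + |1+γ| < 1, and let y ∈ ℝ^L be nonzero. Then the vector x̃ = (0, −(γ/β)yᵀ, −(1+γ)yᵀ)ᵀ ∈ ℝ^{3L} has strictly smaller l¹-norm than the vector x = (yᵀ, 0, 0)ᵀ ∈ ℝ^{3L}, i.e. ‖x̃‖₁ < ‖x‖₁. Moreover, if in addition γ ≠ −1, then x̃ has exactly twice as many nonzero entries as x. -/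
open Classical in
lemma ncard_support_eq_sum {ι : Type*} [Fintype ι] (f : ι → ℝ) :
    (Function.support f).ncard = ∑ i, if f i = 0 then 0 else 1 := by
  have h : Function.support f = ((Finset.univ.filter fun i => ¬ f i = 0 : Finset ι) : Set ι) := by
    ext i
    simp
  rw [h, Set.ncard_coe_finset, Finset.card_filter]
  refine Finset.sum_congr rfl fun i _ => ?_
  by_cases hi : f i = 0 <;> simp [hi]

/-- if `β, γ ≠ 0` with `|γ|/|β| + |1+γ| < 1` and `y ≠ 0`, then the vector
`x̃ = (0, -(γ/β) yᵀ, -(1+γ) yᵀ)ᵀ ∈ ℝ^{3L}` has strictly smaller `l¹`-norm than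
`x = (yᵀ, 0, 0)ᵀ`; moreover, if `γ ≠ -1`, then `x̃` has exactly twice as many nonzero entries
as `x`. -/
theorem l1_smaller_but_less_sparse
    (L : ℕ) (β γ : ℝ) (hβ : β ≠ 0) (hγ : γ ≠ 0)
    (habs : |γ| / |β| + |1 + γ| < 1)
    (y : Fin L → ℝ) (hy : y ≠ 0)
    (x xt : Fin L ⊕ (Fin L ⊕ Fin L) → ℝ)
    (hx : x = Sum.elim y (Sum.elim (fun _ => (0 : ℝ)) (fun _ => (0 : ℝ))))
    (hxt : xt = Sum.elim (fun _ => (0 : ℝ))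
      (Sum.elim (fun k => -(γ / β) * y k) (fun k => -(1 + γ) * y k))) :
    (∑ j, |xt j|) < (∑ j, |x j|) ∧
      (γ ≠ -1 → (Function.support xt).ncard = 2 * (Function.support x).ncard) := by
  subst hx hxt
  constructor
  · have hpos : 0 < ∑ k, |y k| := by
      obtain ⟨k, hk⟩ := Function.ne_iff.mp hy
      exact Finset.sum_pos' (fun i _ => abs_nonneg _) ⟨k, Finset.mem_univ k, abs_pos.mpr hk⟩
    simp only [Fintype.sum_sum_type, Sum.elim_inl, Sum.elim_inr, abs_zero,
      Finset.sum_const_zero, abs_mul, abs_neg, abs_div, ← Finset.mul_sum, zero_add, add_zero]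
    nlinarith
  · intro hg
    have h1 : 1 + γ ≠ 0 := fun h => hg (by linarith)
    have h2 : -(γ / β) ≠ 0 := neg_ne_zero.mpr (div_ne_zero hγ hβ)
    have h3 : -(1 + γ) ≠ 0 := neg_ne_zero.mpr h1
    rw [ncard_support_eq_sum, ncard_support_eq_sum]
    simp only [Fintype.sum_sum_type, Sum.elim_inl, Sum.elim_inr, mul_eq_zero, h2, h3,
      false_or, if_true, Finset.sum_const_zero, zero_add, add_zero]
    rw [two_mul]
    congr!
end

section
/- Let N, m, n be integers with 1 ≤ n ≤ m+1 ≤ N, and set ρ = (m+1)/N and δ = (n−1)/N. Then C(N−n, m+1−n)/C(N, m+1) = ∏_{j=1}^{n} (m−n+j+1)/(N−n+j) ≥ ( ρ(ρ−δ)/(1−δ) )^{n/2}, where C(a,b) denotes the binomial coefficient. -/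
theorem aux_eq (a d n : ℕ) :
    ((a + d).choose a : ℝ) / ((a + n + d).choose (a + n) : ℝ) =
      ∏ i ∈ Finset.range n, ((a : ℝ) + 1 + i) / ((a : ℝ) + d + 1 + i) := by
  induction n with
  | zero =>
    have : ((a + d).choose a : ℝ) ≠ 0 := by
      exact_mod_cast (Nat.choose_pos (by omega)).ne'
    simp [this]
  | succ n ih =>
    rw [Finset.prod_range_succ, ← ih]
    have h := Nat.add_one_mul_choose_eq (a + n + d) (a + n)
    have e : a + (n + 1) + d = a + n + d + 1 := by omega
    have e2 : a + (n + 1) = a + n + 1 := by omega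
    rw [e, e2]
    have p1 : ((a + n + d).choose (a + n) : ℝ) ≠ 0 := by
      exact_mod_cast (Nat.choose_pos (by omega)).ne'
    have p2 : ((a + n + d + 1).choose (a + n + 1) : ℝ) ≠ 0 := by
      exact_mod_cast (Nat.choose_pos (by omega)).ne'
    have h' : ((a : ℝ) + n + d + 1) * ((a + n + d).choose (a + n) : ℝ) =
      ((a + n + d + 1).choose (a + n + 1) : ℝ) * ((a : ℝ) + n + 1) := by exact_mod_cast h
    have p3 : (a : ℝ) + d + 1 + n ≠ 0 := by positivity
    rw [div_mul_div_comm, div_eq_div_iff p2 (mul_ne_zero p1 p3)]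
    linear_combination ((a + d).choose a : ℝ) * h'

theorem aux_ge (a d n : ℕ) (h1 : 1 ≤ n) (c : ℝ)
    (hc : c = ((a : ℝ) + 1) / (a + d + 1) * (((a : ℝ) + n) / (a + d + n))) :
    c ^ ((n : ℝ) / 2) ≤
      ∏ i ∈ Finset.range n, ((a : ℝ) + 1 + i) / ((a : ℝ) + d + 1 + i) := by
  set P := ∏ i ∈ Finset.range n, ((a : ℝ) + 1 + i) / ((a : ℝ) + d + 1 + i) with hP
  have hP0 : 0 ≤ P := Finset.prod_nonneg fun i _ => by positivity
  have hc0 : 0 ≤ c := by rw [hc]; positivity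
  have key : c ^ n ≤ P ^ 2 := by
    have hr : P = ∏ i ∈ Finset.range n,
        ((a : ℝ) + 1 + (n - 1 - i : ℕ)) / ((a : ℝ) + d + 1 + (n - 1 - i : ℕ)) := by
      rw [hP, ← Finset.prod_range_reflect]
    rw [sq]
    nth_rewrite 2 [hr]
    rw [hP, ← Finset.prod_mul_distrib]
    calc c ^ n = ∏ i ∈ Finset.range n, c := by simp
      _ ≤ _ := by
        apply Finset.prod_le_prod
        · intro i _; exact hc0
        · intro i hi
          obtain ⟨k, hk⟩ : ∃ k, n = i + k + 1 :=
            ⟨n - 1 - i, by have := Finset.mem_range.1 hi; omega⟩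
          have e : n - 1 - i = k := by omega
          rw [e, hc, hk, div_mul_div_comm, div_mul_div_comm,
            div_le_div_iff₀ (by positivity) (by positivity)]
          push_cast
          have : 0 ≤ (d : ℝ) * i * k * (2 * a + d + i + k + 2) := by positivity
          linarith
  have e : c ^ ((n : ℝ) / 2) = Real.sqrt (c ^ n) := by
    rw [Real.sqrt_eq_rpow, ← Real.rpow_natCast, ← Real.rpow_mul hc0]
    ring_nf
  rw [e]
  exact Real.sqrt_le_iff.2 ⟨hP0, key⟩



/-- for `1 ≤ n ≤ m + 1 ≤ N`, with `ρ = (m+1)/N` and `δ = (n-1)/N`,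
`C(N-n, m+1-n) / C(N, m+1) = ∏_{j=1}^{n} (m-n+j+1)/(N-n+j) ≥ (ρ(ρ-δ)/(1-δ))^{n/2}`. -/
theorem detection_probability_bound
    (N m n : ℕ) (h1 : 1 ≤ n) (h2 : n ≤ m + 1) (h3 : m + 1 ≤ N)
    (ρ δ : ℝ) (hρ : ρ = ((m : ℝ) + 1) / N) (hδ : δ = ((n : ℝ) - 1) / N) :
    ((N - n).choose (m + 1 - n) : ℝ) / (N.choose (m + 1) : ℝ) =
      (∏ j ∈ Finset.Icc 1 n, ((m : ℝ) - n + j + 1) / ((N : ℝ) - n + j)) ∧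
    (ρ * (ρ - δ) / (1 - δ)) ^ ((n : ℝ) / 2) ≤
      ((N - n).choose (m + 1 - n) : ℝ) / (N.choose (m + 1) : ℝ) := by
  obtain ⟨a, ha⟩ : ∃ a, m + 1 = a + n := ⟨m + 1 - n, by omega⟩
  obtain ⟨d, rfl⟩ : ∃ d, N = a + n + d := ⟨N - (a + n), by omega⟩
  have hm : (m : ℝ) = a + n - 1 := by
    have : (m : ℝ) + 1 = a + n := by exact_mod_cast ha
    linarith
  have e1 : a + n + d - n = a + d := by omega
  have e2 : a + n - n = a := by omega
  have hn : (1 : ℝ) ≤ n := by exact_mod_cast h1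
  rw [ha, e1, e2, aux_eq]
  refine ⟨?_, aux_ge a d n h1 _ ?_⟩
  · rw [Finset.range_eq_Ico, Finset.prod_Ico_eq_prod_range, ← Finset.Ico_add_one_right_eq_Icc,
      Finset.prod_Ico_eq_prod_range]
    apply Finset.prod_congr (by simp)
    intro i _
    rw [hm]
    push_cast
    congr 1 <;> ring
  · have p1 : (a : ℝ) + n + d ≠ 0 := by positivity
    have p1' : (a : ℝ) + d + n ≠ 0 := by positivity
    have p2 : (a : ℝ) + d + 1 ≠ 0 := by positivity
    have q : 1 - δ = ((a : ℝ) + d + 1) / (a + d + n) := by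
      rw [hδ]; push_cast; field_simp; ring
    have q2 : ρ - δ = ((a : ℝ) + 1) / (a + d + n) := by
      rw [hδ, hρ, hm]; push_cast; field_simp; ring
    have q3 : ρ = ((a : ℝ) + n) / (a + d + n) := by
      rw [hρ, hm]; push_cast; field_simp; ring
    rw [q, q2, q3]
    field_simp
end
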